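/- arXiv:1905.08852 — 2 statements merged into one kernel-verified Lean document; each statement's English description precedes it below -/
import Mathlib

section
/- Let h : ℝ → ℝ be continuous, let g : ℝ → ℝ be convex, differentiable, and strictly monotone increasing, and set f = g ∘ h. Let v > 0, u > 0, ε ∈ ℝ, E ∈ ℝ, n ∈ ℕ. Let φ : ℝ → ℝ be twice continuously differentiable, square-integrable, with φ(x) → 0 and φ'(x) → 0 as x → ±∞, satisfying −φ'' + u·h·φ = ε·φ, vanishing only at isolated points and having exactly n sign changes (there exist z₁ < ⋯ < zₙ with (−1)^i·φ ≥ 0 on (zᵢ, zᵢ₊₁), z₀ = −∞, zₙ₊₁ = +∞). Let ψ : ℝ → ℝ be twice continuously differentiable, square-integrable, with ψ(x) → 0 and ψ'(x) → 0 as x → ±∞, satisfying −ψ'' + v·f·ψ = E·ψ, having exactly n zeros, each simple, at each of which ψ changes sign. Assume ψφ and ψ·(−φ'' + v·f·φ) are integrable and ψφ' − ψ'φ → 0 at ±∞. Then for every real M such that (−φ''(x) + v·f(x)·φ(x))/φ(x) ≤ M for all x with φ(x) ≠ 0, one has E ≤ M. -/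
open Filter MeasureTheory

/-!
If `M < E`, the bound on the local energy of `φ` turns into `ψ'' / ψ < φ'' / φ` wherever both
sides make sense. Hence the Wronskian `W = ψ φ' - ψ' φ` increases strictly wherever `ψ φ > 0`, while
`W = (ψ φ)'` at the zeros of `φ`. On a nodal interval of `φ` where `ψ φ > 0`, this forces `W < 0`
by comparison with the right endpoint (`(ψ φ)' ≤ 0` at a zero of `φ`, or `W → 0` at `∞`) and `W > 0`
by comparison with the left one. So `ψ` vanishes on each of the `n + 1` nodal intervals of `φ`,
once too often.
-/

open Set Topology

theorem pos_of_isPreconnected_of_ne_zero {X α : Type*} [TopologicalSpace X] [LinearOrder α]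
    [TopologicalSpace α] [OrderClosedTopology α] [Zero α] {s : Set X} (hs : IsPreconnected s)
    {f : X → α} (hf : ContinuousOn f s) (hne : ∀ x ∈ s, f x ≠ 0) {a : X} (ha : a ∈ s)
    (hpos : 0 < f a) {x : X} (hx : x ∈ s) : 0 < f x := by
  by_contra! hle
  obtain ⟨c, hc, hc0⟩ := hs.intermediate_value hx ha hf ⟨hle, hpos.le⟩
  exact hne c hc hc0

theorem exists_mem_Icc_eq_zero_of_mul_nonpos {f : ℝ → ℝ} {a b : ℝ} (hab : a ≤ b)
    (hf : ContinuousOn f (Icc a b)) (h : f a * f b ≤ 0) : ∃ c ∈ Icc a b, f c = 0 := by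
  rw [← uIcc_of_le hab] at hf ⊢
  have h0 : 0 ∈ uIcc (f a) (f b) := by
    rw [mem_uIcc]
    grind [mul_nonpos_iff]
  exact intermediate_value_uIcc hf h0

theorem deriv_nonpos_of_isMinOn_Icc_right {f : ℝ → ℝ} {a b : ℝ} (hab : a < b)
    (hf : DifferentiableAt ℝ f b) (hmin : IsMinOn f (Icc a b) b) : deriv f b ≤ 0 := by
  have hcone : a - b ∈ posTangentConeAt (Icc a b) b :=
    sub_mem_posTangentConeAt_of_segment_subset <| (convex_Icc a b).segment_subset
      (right_mem_Icc.2 hab.le) (left_mem_Icc.2 hab.le)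
  have h : 0 ≤ (a - b) * deriv f b := by
    simpa using hmin.localize.hasFDerivWithinAt_nonneg
      hf.hasDerivAt.hasFDerivAt.hasFDerivWithinAt hcone
  exact nonpos_of_mul_nonneg_right h (sub_neg.2 hab)

theorem dense_ne_zero_of_eventually_nhdsNE {X α : Type*} [TopologicalSpace X]
    [∀ x : X, (𝓝[≠] x).NeBot] [Zero α] {f : X → α}
    (h : ∀ x, f x = 0 → ∀ᶠ w in 𝓝[≠] x, f w ≠ 0) : Dense {x | f x ≠ 0} := by
  intro x
  by_cases hx : f x = 0
  · exact mem_closure_iff_frequently.2 ((h x hx).frequently.filter_mono nhdsWithin_le_nhds)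
  · exact subset_closure hx

theorem exists_mem_dense_between_finsets {α : Type*} [LinearOrder α] [DenselyOrdered α]
    [NoMinOrder α] [NoMaxOrder α] [Nonempty α] [TopologicalSpace α] [OrderTopology α]
    {s : Set α} (hs : Dense s) (lo hi : Finset α) (hlt : ∀ x ∈ lo, ∀ y ∈ hi, x < y) :
    ∃ m ∈ s, (∀ x ∈ lo, x < m) ∧ ∀ y ∈ hi, m < y := by
  obtain ⟨a, hloa, hahi⟩ := Order.exists_between_finsets lo hi hlt
  obtain ⟨b, hab, hbhi⟩ := Order.exists_between_finsets {a} hi (by simpa using hahi)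
  obtain ⟨m, hms, ham, hmb⟩ := hs.exists_between (hab a (Finset.mem_singleton_self a))
  exact ⟨m, hms, fun x hx => (hloa x hx).trans ham, fun y hy => hmb.trans (hbhi y hy)⟩

theorem encard_le_of_subset_range_fin {α : Type*} {n : ℕ} {y : Fin n → α} {s : Set α}
    (hs : s ⊆ range y) : s.encard ≤ n := calc
  s.encard ≤ (y '' univ).encard := encard_le_encard (by rwa [image_univ])
  _ ≤ (univ : Set (Fin n)).encard := encard_image_le y univ
  _ = n := by simp

section Wronskian

variable {𝕜 : Type*} [NontriviallyNormedField 𝕜] {f g : 𝕜 → 𝕜} {x : 𝕜}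

/-- The Wronskian `f g' - f' g` of two functions of one variable, the quantity monitored in Sturm
comparison; the sign convention is that of `Polynomial.wronskian`. -/
noncomputable def wronskian (f g : 𝕜 → 𝕜) (x : 𝕜) : 𝕜 :=
  f x * deriv g x - deriv f x * g x

theorem wronskian_neg_left (f g : 𝕜 → 𝕜) : wronskian (-f) g = -wronskian f g := by
  funext x
  simp only [wronskian, deriv.neg, Pi.neg_apply]
  ring

theorem wronskian_comp_neg (f g : 𝕜 → 𝕜) :
    wronskian (fun x => f (-x)) (fun x => g (-x)) = fun x => -wronskian f g (-x) := by
  funext x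
  simp only [wronskian, deriv_comp_neg]
  ring

theorem hasDerivAt_wronskian (hf : DifferentiableAt 𝕜 f x) (hf' : DifferentiableAt 𝕜 (deriv f) x)
    (hg : DifferentiableAt 𝕜 g x) (hg' : DifferentiableAt 𝕜 (deriv g) x) :
    HasDerivAt (wronskian f g) (f x * deriv (deriv g) x - deriv (deriv f) x * g x) x :=
  ((hf.hasDerivAt.mul hg'.hasDerivAt).sub (hf'.hasDerivAt.mul hg.hasDerivAt)).congr_deriv (by ring)

theorem wronskian_eq_deriv_mul (hf : DifferentiableAt 𝕜 f x) (hg : DifferentiableAt 𝕜 g x)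
    (hgx : g x = 0) : wronskian f g x = deriv (f * g) x := by
  simp [wronskian, deriv_mul hf hg, hgx]

end Wronskian

/-- The function `f` oscillates strictly faster than `g`: as solutions of `f'' + p f = 0` and
`g'' + q g = 0` they satisfy `q < p`. The coefficients `p = -f'' / f` and `q = -g'' / g` are
compared only where neither function vanishes, which makes the notion insensitive to rescaling `f`
and `g` and requires no equation at the zeros. This is the hypothesis of Sturm comparison. -/
structure StrictSturmMajorant (f g : ℝ → ℝ) : Prop where
  differentiable_left : Differentiable ℝ f
  differentiable_deriv_left : Differentiable ℝ (deriv f)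
  differentiable_right : Differentiable ℝ g
  differentiable_deriv_right : Differentiable ℝ (deriv g)
  deriv_deriv_div_lt : ∀ x, f x ≠ 0 → g x ≠ 0 →
    deriv (deriv f) x / f x < deriv (deriv g) x / g x

namespace StrictSturmMajorant

variable {f g : ℝ → ℝ} {a b : ℝ}

theorem neg_left (h : StrictSturmMajorant f g) : StrictSturmMajorant (-f) g where
  differentiable_left := h.differentiable_left.neg
  differentiable_deriv_left := by
    rw [deriv.neg']
    exact h.differentiable_deriv_left.neg
  differentiable_right := h.differentiable_right
  differentiable_deriv_right := h.differentiable_deriv_right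
  deriv_deriv_div_lt x hf hg := by
    simpa [deriv.neg', neg_div_neg_eq] using h.deriv_deriv_div_lt x (neg_ne_zero.1 hf) hg

theorem comp_neg (h : StrictSturmMajorant f g) :
    StrictSturmMajorant (fun x => f (-x)) (fun x => g (-x)) := by
  have deriv_reflect (k : ℝ → ℝ) : deriv (fun x => k (-x)) = fun x => -deriv k (-x) :=
    funext fun _ => deriv_comp_neg ..
  obtain ⟨hf, hf', hg, hg', hlt⟩ := h
  refine ⟨by fun_prop, ?_, by fun_prop, ?_, fun x hfx hgx => ?_⟩
  · rw [deriv_reflect]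
    fun_prop
  · rw [deriv_reflect]
    fun_prop
  · simpa [deriv_reflect, deriv_comp_neg] using hlt (-x) hfx hgx

theorem continuous_mul (h : StrictSturmMajorant f g) : Continuous (f * g) :=
  h.differentiable_left.continuous.mul h.differentiable_right.continuous

theorem hasDerivAt_wronskian (h : StrictSturmMajorant f g) (x : ℝ) :
    HasDerivAt (wronskian f g) (f x * deriv (deriv g) x - deriv (deriv f) x * g x) x :=
  _root_.hasDerivAt_wronskian (h.differentiable_left x) (h.differentiable_deriv_left x)
    (h.differentiable_right x) (h.differentiable_deriv_right x)

theorem deriv_wronskian_pos (h : StrictSturmMajorant f g) {x : ℝ} (hx : 0 < f x * g x) :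
    0 < deriv (wronskian f g) x := by
  have hf : f x ≠ 0 := left_ne_zero_of_mul hx.ne'
  have hg : g x ≠ 0 := right_ne_zero_of_mul hx.ne'
  calc 0 < f x * g x * (deriv (deriv g) x / g x - deriv (deriv f) x / f x) :=
        mul_pos hx (sub_pos.2 (h.deriv_deriv_div_lt x hf hg))
    _ = f x * deriv (deriv g) x - deriv (deriv f) x * g x := by field_simp
    _ = deriv (wronskian f g) x := (h.hasDerivAt_wronskian x).deriv.symm

theorem strictMonoOn_wronskian (h : StrictSturmMajorant f g) {s : Set ℝ} (hs : Convex ℝ s)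
    (hpos : ∀ x ∈ interior s, 0 < f x * g x) : StrictMonoOn (wronskian f g) s :=
  strictMonoOn_of_deriv_pos hs
    (fun x _ => (h.hasDerivAt_wronskian x).continuousAt.continuousWithinAt)
    fun x hx => h.deriv_wronskian_pos (hpos x hx)

theorem wronskian_neg_of_pos_Ico (h : StrictSturmMajorant f g) (hab : a < b) (hgb : g b = 0)
    (hpos : ∀ x ∈ Ico a b, 0 < f x * g x) : wronskian f g a < 0 := by
  have hdiff : DifferentiableAt ℝ (f * g) b :=
    (h.differentiable_left b).mul (h.differentiable_right b)
  have hmin : IsMinOn (f * g) (Icc a b) b := by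
    intro x hx
    rcases hx.2.eq_or_lt with rfl | hxb
    · exact le_refl ((f * g) x)
    · simpa [hgb] using (hpos x ⟨hx.1, hxb⟩).le
  have hmono : StrictMonoOn (wronskian f g) (Icc a b) :=
    h.strictMonoOn_wronskian (convex_Icc a b) fun x hx =>
      hpos x (Ioo_subset_Ico_self (by rwa [interior_Icc] at hx))
  calc wronskian f g a < wronskian f g b :=
        hmono (left_mem_Icc.2 hab.le) (right_mem_Icc.2 hab.le) hab
    _ = deriv (f * g) b :=
        wronskian_eq_deriv_mul (h.differentiable_left b) (h.differentiable_right b) hgb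
    _ ≤ 0 := deriv_nonpos_of_isMinOn_Icc_right hab hdiff hmin

theorem wronskian_neg_of_pos_Ici (h : StrictSturmMajorant f g)
    (htop : Tendsto (wronskian f g) atTop (𝓝 0)) (hpos : ∀ x ∈ Ici a, 0 < f x * g x) :
    wronskian f g a < 0 := by
  have hmono : StrictMonoOn (wronskian f g) (Ici a) :=
    h.strictMonoOn_wronskian (convex_Ici a) fun x hx => hpos x (interior_subset hx)
  have ha : a < a + 1 := lt_add_one a
  have hle : wronskian f g (a + 1) ≤ 0 := ge_of_tendsto htop <|
    (eventually_ge_atTop (a + 1)).mono fun x hx =>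
      hmono.monotoneOn ha.le (ha.le.trans hx) hx
  exact (hmono self_mem_Ici ha.le ha).trans_le hle

theorem wronskian_neg_of_forall_ne_zero (h : StrictSturmMajorant f g)
    (htop : Tendsto (wronskian f g) atTop (𝓝 0)) (ha : 0 < f a * g a)
    (hf : ∀ b, a ≤ b → (∀ x ∈ Icc a b, g x ≠ 0) → f b ≠ 0) : wronskian f g a < 0 := by
  have hpos {s : Set ℝ} (hs : s.OrdConnected) (has : a ∈ s) (hsa : s ⊆ Ici a)
      (hg : ∀ x ∈ s, g x ≠ 0) (x : ℝ) (hx : x ∈ s) : 0 < f x * g x :=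
    pos_of_isPreconnected_of_ne_zero hs.isPreconnected h.continuous_mul.continuousOn
      (fun y hy => mul_ne_zero (hf y (hsa hy) fun w hw => hg w (hs.out has hy hw)) (hg y hy))
      has ha hx
  let Z : Set ℝ := Ici a ∩ g ⁻¹' {0}
  by_cases hZ : Z.Nonempty
  · obtain ⟨⟨hab, hgb⟩, hb⟩ : IsLeast Z (sInf Z) :=
      (isClosed_Ici.inter (isClosed_singleton.preimage h.differentiable_right.continuous))
        |>.isLeast_csInf hZ (bddBelow_Ici.mono inter_subset_left)
    have hlt : a < sInf Z := hab.lt_of_ne fun hEq =>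
      right_ne_zero_of_mul ha.ne' (hEq ▸ hgb)
    exact h.wronskian_neg_of_pos_Ico hlt hgb <| hpos ordConnected_Ico (left_mem_Ico.2 hlt)
      Ico_subset_Ici_self fun x hx hgx => hx.2.not_ge (hb ⟨hx.1, hgx⟩)
  · exact h.wronskian_neg_of_pos_Ici htop <| hpos ordConnected_Ici self_mem_Ici Subset.rfl
      fun x hx hgx => hZ ⟨x, hx, hgx⟩

theorem exists_eq_zero_of_ne_zero (h : StrictSturmMajorant f g)
    (hbot : Tendsto (wronskian f g) atBot (𝓝 0)) (htop : Tendsto (wronskian f g) atTop (𝓝 0))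
    (hga : g a ≠ 0) : ∃ b, f b = 0 ∧ ∀ x ∈ uIcc a b, g x ≠ 0 := by
  by_contra hf
  simp only [not_exists, not_and'] at hf
  wlog hpos : 0 < f a * g a generalizing f
  · have hne : f a * g a ≠ 0 := mul_ne_zero (hf a (by simpa using hga)) hga
    refine this h.neg_left ?_ ?_ (fun b hb => neg_ne_zero.2 (hf b hb)) ?_
    · rw [wronskian_neg_left, ← neg_zero]
      exact hbot.neg
    · rw [wronskian_neg_left, ← neg_zero]
      exact htop.neg
    · simpa using hne.lt_of_le (not_lt.1 hpos)
  have hright : wronskian f g a < 0 :=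
    h.wronskian_neg_of_forall_ne_zero htop hpos fun b hab hb => hf b (by rwa [uIcc_of_le hab])
  have hleft : wronskian (fun x => f (-x)) (fun x => g (-x)) (-a) < 0 := by
    refine h.comp_neg.wronskian_neg_of_forall_ne_zero ?_ (by simpa using hpos) fun b hab hb =>
      hf (-b) fun x hx => ?_
    · rw [wronskian_comp_neg, ← neg_zero]
      exact (hbot.comp tendsto_neg_atTop_atBot).neg
    · rw [uIcc_of_ge (neg_le.1 hab)] at hx
      simpa using hb (-x) ⟨neg_le_neg hx.2, neg_le.1 hx.1⟩
  simp only [wronskian_comp_neg, neg_neg, neg_lt_zero] at hleft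
  exact hright.not_gt hleft

theorem exists_strictMono_zeros (h : StrictSturmMajorant f g)
    (hbot : Tendsto (wronskian f g) atBot (𝓝 0)) (htop : Tendsto (wronskian f g) atTop (𝓝 0))
    {n : ℕ} {x : Fin (n + 1) → ℝ} (hx : ∀ i, g (x i) ≠ 0)
    (hz : ∀ i : Fin n, ∃ c ∈ Icc (x i.castSucc) (x i.succ), g c = 0) :
    ∃ y : Fin (n + 1) → ℝ, StrictMono y ∧ ∀ i, f (y i) = 0 := by
  choose y hfy hgy using fun i => h.exists_eq_zero_of_ne_zero hbot htop (hx i)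
  refine ⟨y, Fin.strictMono_iff_lt_succ.2 fun i => ?_, hfy⟩
  obtain ⟨c, hc, hgc⟩ := hz i
  have hyc : y i.castSucc < c := lt_of_not_ge fun hle =>
    hgy i.castSucc c (mem_uIcc_of_le hc.1 hle) hgc
  have hcy : c < y i.succ := lt_of_not_ge fun hle =>
    hgy i.succ c (mem_uIcc_of_ge hle hc.2) hgc
  exact hyc.trans hcy

end StrictSturmMajorant

theorem exists_strictMono_alternating {n : ℕ} {φ : ℝ → ℝ} (hφ : Dense {x | φ x ≠ 0})
    {z : Fin n → ℝ} (hz : StrictMono z)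
    (hsign : ∀ (i : Fin (n + 1)) (x : ℝ), (∀ j : Fin n, (j : ℕ) < i → z j < x) →
      (∀ j : Fin n, (i : ℕ) ≤ j → x < z j) → 0 ≤ (-1 : ℝ) ^ (i : ℕ) * φ x) :
    ∃ x : Fin (n + 1) → ℝ, StrictMono x ∧ ∀ i : Fin (n + 1), 0 < (-1 : ℝ) ^ (i : ℕ) * φ (x i) := by
  have hcell (i : Fin (n + 1)) : ∃ x, φ x ≠ 0 ∧ (∀ j : Fin n, (j : ℕ) < i → z j < x) ∧
      ∀ j : Fin n, (i : ℕ) ≤ j → x < z j := by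
    simpa using exists_mem_dense_between_finsets hφ
      ({j : Fin n | (j : ℕ) < i}.toFinset.image z) ({j : Fin n | (i : ℕ) ≤ j}.toFinset.image z)
      (by simpa using fun j hj k hk => hz (Fin.lt_def.2 (hj.trans_le hk)))
  choose x hx hlo hhi using hcell
  refine ⟨x, Fin.strictMono_iff_lt_succ.2 fun i => ?_, fun i => ?_⟩
  · exact (hhi i.castSucc i le_rfl).trans (hlo i.succ i (Nat.lt_succ_self i))
  · exact (hsign i (x i) (hlo i) (hhi i)).lt_of_ne' (mul_ne_zero (by simp) (hx i))

theorem strictSturmMajorant_of_localEnergy_le {V φ ψ : ℝ → ℝ} {E M : ℝ} (hEM : M < E)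
    (hφ : Differentiable ℝ φ) (hφ' : Differentiable ℝ (deriv φ))
    (hψ : Differentiable ℝ ψ) (hψ' : Differentiable ℝ (deriv ψ))
    (hψeq : ∀ x, -deriv (deriv ψ) x + V x * ψ x = E * ψ x)
    (hM : ∀ x, φ x ≠ 0 → (-deriv (deriv φ) x + V x * φ x) / φ x ≤ M) :
    StrictSturmMajorant ψ φ := by
  refine ⟨hψ, hψ', hφ, hφ', fun x hψx hφx => ?_⟩
  calc deriv (deriv ψ) x / ψ x = V x - E := by
        rw [div_eq_iff hψx]
        linarith [hψeq x]
    _ < V x - M := sub_lt_sub_left hEM _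
    _ ≤ V x - (-deriv (deriv φ) x + V x * φ x) / φ x := sub_le_sub_left (hM x hφx) _
    _ = deriv (deriv φ) x / φ x := by
        field_simp
        ring

theorem excited_state_local_energy_upper_bound_general {V φ ψ : ℝ → ℝ} {E M : ℝ} {n : ℕ}
    (hφ : Differentiable ℝ φ) (hφ' : Differentiable ℝ (deriv φ))
    {x : Fin (n + 1) → ℝ} (hx : StrictMono x)
    (hsign : ∀ i : Fin (n + 1), 0 < (-1 : ℝ) ^ (i : ℕ) * φ (x i))
    (hψ : Differentiable ℝ ψ) (hψ' : Differentiable ℝ (deriv ψ))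
    (hψeq : ∀ x, -deriv (deriv ψ) x + V x * ψ x = E * ψ x)
    (hzeros : {x | ψ x = 0}.encard ≤ n)
    (hbot : Tendsto (wronskian ψ φ) atBot (𝓝 0)) (htop : Tendsto (wronskian ψ φ) atTop (𝓝 0))
    (hM : ∀ x, φ x ≠ 0 → (-deriv (deriv φ) x + V x * φ x) / φ x ≤ M) : E ≤ M := by
  by_contra! hEM
  have hS := strictSturmMajorant_of_localEnergy_le hEM hφ hφ' hψ hψ' hψeq hM
  have hchange (i : Fin n) : ∃ c ∈ Icc (x i.castSucc) (x i.succ), φ c = 0 := by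
    refine exists_mem_Icc_eq_zero_of_mul_nonpos (hx.monotone i.castSucc_lt_succ.le)
      hφ.continuous.continuousOn ?_
    have hprod := mul_pos (hsign i.castSucc) (hsign i.succ)
    rw [Fin.val_castSucc, Fin.val_succ, mul_mul_mul_comm, ← pow_add,
      Odd.neg_one_pow ⟨i, by ring⟩] at hprod
    linarith
  obtain ⟨y, hy, hψy⟩ :=
    hS.exists_strictMono_zeros hbot htop (fun i => right_ne_zero_of_mul (hsign i).ne') hchange
  have hcard : ((n + 1 : ℕ) : ℕ∞) ≤ n := calc
    ((n + 1 : ℕ) : ℕ∞) ≤ (range y).encard := by simpa using hy.injective.encard_range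
    _ ≤ {x | ψ x = 0}.encard := encard_le_encard (range_subset_iff.2 hψy)
    _ ≤ n := hzeros
  exact Nat.not_succ_le_self n (Nat.cast_le.1 hcard)

/-- Excited-state upper-bound local energy theorem (Theorem 4 of the paper):
if the trial function `φ` is an `n`-node eigenfunction of the base operator
`-d²/dx² + u·h` where `f = g ∘ h` with `g` convex and increasing, then any upper
bound `M` for the local energy `(-φ'' + v·f·φ)/φ` (over points where `φ ≠ 0`)
satisfies `E ≤ M`, where `E` is the `n`-th eigenvalue of `-d²/dx² + v·f`. -/
theorem excited_state_local_energy_upper_bound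
    (h g : ℝ → ℝ) (hh : Continuous h)
    (hgconv : ConvexOn ℝ Set.univ g) (hgdiff : Differentiable ℝ g)
    (hgmono : StrictMono g)
    (f : ℝ → ℝ) (hf : f = g ∘ h)
    (v u ε E : ℝ) (hv : 0 < v) (hu : 0 < u) (n : ℕ)
    -- φ : n-node eigenfunction of the base problem −φ'' + u·h·φ = ε·φ
    (φ : ℝ → ℝ) (hφC2 : ContDiff ℝ 2 φ)
    (hφL2 : Integrable (fun x => (φ x) ^ 2))
    (hφtop : Tendsto φ atTop (nhds 0)) (hφbot : Tendsto φ atBot (nhds 0))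
    (hφ'top : Tendsto (deriv φ) atTop (nhds 0))
    (hφ'bot : Tendsto (deriv φ) atBot (nhds 0))
    (hφeq : ∀ x, -(deriv (deriv φ) x) + u * h x * φ x = ε * φ x)
    (hφiso : ∀ x, φ x = 0 → ∃ δ > 0, ∀ w, w ≠ x → |w - x| < δ → φ w ≠ 0)
    (z : Fin n → ℝ) (hz : StrictMono z)
    (hφsign : ∀ (i : Fin (n + 1)) (x : ℝ),
      (∀ j : Fin n, (j : ℕ) < (i : ℕ) → z j < x) →
      (∀ j : Fin n, (i : ℕ) ≤ (j : ℕ) → x < z j) →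
      0 ≤ (-1 : ℝ) ^ (i : ℕ) * φ x)
    -- ψ : n-node eigenfunction of the target problem −ψ'' + v·f·ψ = E·ψ
    (ψ : ℝ → ℝ) (hψC2 : ContDiff ℝ 2 ψ)
    (hψL2 : Integrable (fun x => (ψ x) ^ 2))
    (hψtop : Tendsto ψ atTop (nhds 0)) (hψbot : Tendsto ψ atBot (nhds 0))
    (hψ'top : Tendsto (deriv ψ) atTop (nhds 0))
    (hψ'bot : Tendsto (deriv ψ) atBot (nhds 0))
    (hψeq : ∀ x, -(deriv (deriv ψ) x) + v * f x * ψ x = E * ψ x)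
    (y : Fin n → ℝ) (hy : StrictMono y)
    (hyzero : ∀ i, ψ (y i) = 0)
    (hyall : ∀ x, ψ x = 0 → ∃ i, x = y i)
    (hysimple : ∀ i, deriv ψ (y i) ≠ 0)
    (hysign : ∀ i, ∃ δ > 0, ∀ a b : ℝ,
      y i - δ < a → a < y i → y i < b → b < y i + δ → ψ a * ψ b < 0)
    (hint1 : Integrable (fun x => ψ x * φ x))
    (hint2 : Integrable (fun x => ψ x * (-(deriv (deriv φ) x) + v * f x * φ x)))
    (hWtop : Tendsto (fun x => ψ x * deriv φ x - deriv ψ x * φ x) atTop (nhds 0))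
    (hWbot : Tendsto (fun x => ψ x * deriv φ x - deriv ψ x * φ x) atBot (nhds 0))
    (M : ℝ)
    (hM : ∀ x, φ x ≠ 0 → (-(deriv (deriv φ) x) + v * f x * φ x) / φ x ≤ M) :
    E ≤ M := by
  have hdense : Dense {x | φ x ≠ 0} := dense_ne_zero_of_eventually_nhdsNE fun x hx => by
    obtain ⟨δ, hδ, hne⟩ := hφiso x hx
    rw [eventually_nhdsWithin_iff, Metric.eventually_nhds_iff]
    exact ⟨δ, hδ, fun w hw hwx => hne w hwx hw⟩
  obtain ⟨x, hx, hsign⟩ := exists_strictMono_alternating hdense hz hφsign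
  have hzeros : {x | ψ x = 0}.encard ≤ n :=
    encard_le_of_subset_range_fin fun x hx => (hyall x hx).imp fun _ => Eq.symm
  exact excited_state_local_energy_upper_bound_general (V := fun x => v * f x)
    (hφC2.differentiable two_ne_zero) hφC2.differentiable_deriv_two hx hsign
    (hψC2.differentiable two_ne_zero) hψC2.differentiable_deriv_two hψeq hzeros hWbot hWtop hM
end

section
/- Let h : ℝ → ℝ be continuous, let g : ℝ → ℝ be concave, differentiable, and strictly monotone increasing, and set f = g ∘ h. Let v > 0, t ∈ ℝ, ε ∈ ℝ, and set u = v·g'(h(t)). Let φ : ℝ → ℝ be twice continuously differentiable, not identically zero, vanishing only at isolated points, and satisfying −φ''(x) + u·h(x)·φ(x) = ε·φ(x) for all x. Then the supremum, over all x with φ(x) ≠ 0, of the local energy (−φ''(x) + v·f(x)·φ(x))/φ(x) equals v·(g(h(t)) − g'(h(t))·h(t)) + ε. In particular, the local-energy upper bound obtained from the trial function φ coincides with the envelope-theory upper bound v·a(t) + ε, where a(t) = g(h(t)) − g'(h(t))·h(t). -/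
/-!
Where `φ ≠ 0`, dividing the base equation `T φ + U φ = ε φ` by `φ` shows that replacing the base
potential `U` by `V` turns the local energy `ε` into `V - U + ε`. With `V = v·g(h)` and
`U = v·g'(h(t))·h` the difference `V - U` is `v` times the gap between `g` and the linear function
of slope `g'(h(t))`, evaluated at `h(x)`; concavity of `g` makes it largest at `x = t`. If `φ`
vanishes at `t`, the maximum need not be attained on `{φ ≠ 0}`, but it is approached there, since
`t` is a limit of points where `φ ≠ 0`.
-/

open Set Function Filter Topology

theorem isMaxOn_sub_mul_of_concaveOn {s : Set ℝ} {g : ℝ → ℝ} {b c : ℝ} (hg : ConcaveOn ℝ s g)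
    (hc : c ∈ s) (hb : HasDerivWithinAt g b s c) : IsMaxOn (fun y => g y - b * y) s c := by
  refine isMaxOn_iff.2 fun y hy => ?_
  rcases lt_trichotomy y c with hyc | rfl | hcy
  · have hslope := hg.le_slope_of_hasDerivWithinAt hy hc hyc hb
    rw [slope_def_field, le_div_iff₀ (sub_pos.2 hyc)] at hslope
    linarith
  · rfl
  · have hslope := hg.slope_le_of_hasDerivWithinAt hc hy hcy hb
    rw [slope_def_field, div_le_iff₀ (sub_pos.2 hcy)] at hslope
    linarith

theorem isLUB_image_of_mem_closure {X α : Type*} [TopologicalSpace X] [TopologicalSpace α]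
    [LinearOrder α] [OrderTopology α] {F : X → α} {S : Set X} {t : X}
    (hF : ContinuousWithinAt F S t) (ht : t ∈ closure S) (hmax : IsMaxOn F S t) :
    IsLUB (F '' S) (F t) :=
  isLUB_of_mem_closure (forall_mem_image.2 hmax) (hF.mem_closure_image ht)

theorem dense_support_of_isolated_zeros {X M : Type*} [PseudoMetricSpace X] [Zero M]
    [∀ x : X, (𝓝[≠] x).NeBot] {φ : X → M}
    (hφ : ∀ x, φ x = 0 → ∃ δ > 0, ∀ w, w ≠ x → dist w x < δ → φ w ≠ 0) :
    Dense (support φ) := by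
  intro x
  by_cases hx : φ x = 0
  · obtain ⟨δ, hδ, hne⟩ := hφ x hx
    have hpunctured : ∀ᶠ w in 𝓝[≠] x, w ∈ support φ := by
      filter_upwards [self_mem_nhdsWithin, nhdsWithin_le_nhds (Metric.ball_mem_nhds x hδ)]
        with w hwx hwδ using hne w hwx hwδ
    exact (hpunctured.frequently.filter_mono nhdsWithin_le_nhds).mem_closure
  · exact subset_closure hx

/-- The local energy `(Hφ)/φ` of the Hamiltonian `H = T + V` in the trial state `φ`. The kinetic
term `T` is an arbitrary map on functions, `-d²/dx²` in the one-dimensional case. Meaningful only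
where `φ x ≠ 0`: it takes the junk value `0` at the zeros of `φ`. -/
noncomputable def localEnergy {X : Type*} (T : (X → ℝ) → X → ℝ) (V φ : X → ℝ) (x : X) : ℝ :=
  (T φ x + V x * φ x) / φ x

section LocalEnergy

variable {X : Type*} {T : (X → ℝ) → X → ℝ} {U V φ : X → ℝ} {ε : ℝ}

theorem localEnergy_eq_sub_add {x : X} (hx : φ x ≠ 0)
    (hφeq : T φ x + U x * φ x = ε * φ x) : localEnergy T V φ x = V x - U x + ε := by
  rw [localEnergy, div_eq_iff hx]
  linear_combination hφeq

variable [TopologicalSpace X] {t : X}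

theorem isLUB_range_localEnergy (hφeq : ∀ x, T φ x + U x * φ x = ε * φ x)
    (ht : t ∈ closure (support φ)) (hcont : ContinuousAt (fun x => V x - U x) t)
    (hmax : IsMaxOn (fun x => V x - U x) (support φ) t) :
    IsLUB (range fun x : {x // φ x ≠ 0} => localEnergy T V φ x) (V t - U t + ε) := by
  have himage : (range fun x : {x // φ x ≠ 0} => localEnergy T V φ x) =
      (fun x => V x - U x + ε) '' support φ := by
    rw [image_eq_range]
    exact congrArg range (funext fun x => localEnergy_eq_sub_add x.2 (hφeq x))
  rw [himage]
  exact isLUB_image_of_mem_closure (hcont.add_const ε).continuousWithinAt ht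
    (hmax.add isMaxOn_const)

theorem local_energy_envelope_coincidence_concave_general {s : Set ℝ} {g : ℝ → ℝ} {h : X → ℝ}
    {v b : ℝ} (hg : ConcaveOn ℝ s g) (hhs : ∀ x, h x ∈ s) (hh : ContinuousAt h t)
    (hb : HasDerivWithinAt g b s (h t)) (hv : 0 ≤ v) (ht : t ∈ closure (support φ))
    (hφeq : ∀ x, T φ x + v * b * h x * φ x = ε * φ x) :
    IsLUB (range fun x : {x // φ x ≠ 0} => localEnergy T (fun x => v * g (h x)) φ x)
      (v * (g (h t) - b * h t) + ε) := by
  have hcont : ContinuousAt (fun x => v * g (h x) - v * b * h x) t := by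
    have hgh : ContinuousAt (fun x => g (h x)) t :=
      hb.continuousWithinAt.tendsto.comp
        (tendsto_nhdsWithin_iff.2 ⟨hh, Eventually.of_forall hhs⟩)
    exact (hgh.const_mul v).sub (hh.const_mul (v * b))
  have hmax : IsMaxOn (fun x => v * g (h x) - v * b * h x) (support φ) t := by
    refine isMaxOn_iff.2 fun x _ => ?_
    have htangent : g (h x) - b * h x ≤ g (h t) - b * h t :=
      isMaxOn_iff.1 (isMaxOn_sub_mul_of_concaveOn hg (hhs t) hb) (h x) (hhs x)
    linarith [mul_le_mul_of_nonneg_left htangent hv]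
  convert isLUB_range_localEnergy hφeq ht hcont hmax using 1
  ring

end LocalEnergy

/-- Coincidence theorem (concave case): if `φ` is an eigenfunction of the base
operator `-d²/dx² + u·h` with eigenvalue `ε`, where `u = v·g'(h(t))` and
`f = g ∘ h` with `g` concave and increasing, then the supremum of the local
energy `(-φ'' + v·f·φ)/φ` over points where `φ ≠ 0` equals the envelope upper
bound `v·a(t) + ε` with `a(t) = g(h(t)) − g'(h(t))·h(t)`. -/
theorem local_energy_envelope_coincidence_concave
    (h g : ℝ → ℝ) (hh : Continuous h)
    (hgconc : ConcaveOn ℝ Set.univ g) (hgdiff : Differentiable ℝ g)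
    (hgmono : StrictMono g)
    (f : ℝ → ℝ) (hf : f = g ∘ h)
    (v t ε : ℝ) (hv : 0 < v)
    (u : ℝ) (hu : u = v * deriv g (h t))
    (φ : ℝ → ℝ) (hφC2 : ContDiff ℝ 2 φ)
    (hφne : ∃ x, φ x ≠ 0)
    (hφiso : ∀ x, φ x = 0 → ∃ δ > 0, ∀ w, w ≠ x → |w - x| < δ → φ w ≠ 0)
    (hφeq : ∀ x, -(deriv (deriv φ) x) + u * h x * φ x = ε * φ x) :
    (⨆ x : {x : ℝ // φ x ≠ 0},
        (-(deriv (deriv φ) (x : ℝ)) + v * f (x : ℝ) * φ (x : ℝ)) / φ (x : ℝ)) =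
      v * (g (h t) - deriv g (h t) * h t) + ε := by
  subst hf hu
  have : Nonempty {x : ℝ // φ x ≠ 0} := nonempty_subtype.2 hφne
  exact (local_energy_envelope_coincidence_concave_general (T := fun ψ x => -deriv (deriv ψ) x)
    hgconc (fun _ => mem_univ _) hh.continuousAt (hgdiff (h t)).hasDerivAt.hasDerivWithinAt hv.le
    (dense_support_of_isolated_zeros hφiso t) hφeq).ciSup_eq
end
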